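/- Let (A(n))_{n∈ℤ} be a stationary and ergodic sequence of random d×d matrices with entries in ℝ_max, almost surely having at least one finite entry on each row, such that the positive part of max_{ij} A_{ij}(0) is integrable. If (1/n)·x(n,0) converges almost surely, then its limit is deterministic and for every i ∈ {1,…,d}, lim_n (1/n)·x_i(n,0) = max{ γ^{(c)} : c a strongly connected component of 𝒢(A) with i → c } almost surely. -/

import Mathlib

open Filter MeasureTheory ProbabilityTheory Topology

noncomputable section

/-- Max-plus action of a `d × d` matrix over `ℝ_max = ℝ ∪ {-∞}` (encoded as `EReal`,
with `⊤` never used) on a vector: `(A ⊗ v) i = max_j (A i j + v j)`. -/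
def mpVec {d : ℕ} (A : Fin d → Fin d → EReal) (v : Fin d → EReal) : Fin d → EReal :=
  fun i => ⨆ j, A i j + v j

/-- `appProd n f v = f 0 ⊗ f 1 ⊗ ⋯ ⊗ f (n-1) ⊗ v` in the max-plus algebra. -/
def appProd {d : ℕ} : ℕ → (ℕ → Fin d → Fin d → EReal) → (Fin d → EReal) → Fin d → EReal
  | 0, _, v => v
  | n + 1, f, v => mpVec (f 0) (appProd n (fun k => f (k + 1)) v)

/-- `xvec f n = f (n-1) ⊗ ⋯ ⊗ f 0 ⊗ 0`; with `f m = A(m)` this is `x(n, 0)`. -/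
def xvec {d : ℕ} (f : ℕ → Fin d → Fin d → EReal) : ℕ → Fin d → EReal
  | 0 => fun _ => 0
  | n + 1 => mpVec (f n) (xvec f n)

/-- `lvec n f = f 0 ⊗ f 1 ⊗ ⋯ ⊗ f (n-1) ⊗ 0`; with `f k = A(-(k+1))` this is `y(n, 0)`. -/
def lvec {d : ℕ} (n : ℕ) (f : ℕ → Fin d → Fin d → EReal) : Fin d → EReal :=
  appProd n f (fun _ => 0)

/-- Multiplication of an extended real by `1/n`. -/
def mpScale (n : ℕ) (x : EReal) : EReal := (((n : ℝ)⁻¹ : ℝ) : EReal) * x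

open Classical in
/-- Restriction of a matrix to the indices in `c`: entries outside `c × c` are `-∞`. -/
def mpRestrict {d : ℕ} (c : Set (Fin d)) (M : Fin d → Fin d → EReal) : Fin d → Fin d → EReal :=
  fun i j => if i ∈ c ∧ j ∈ c then M i j else ⊥

/-- Arc relation of the graph `𝒢(A)` of a random matrix `A`:
`(i,j)` is an arc iff `A ω i j ≠ -∞` with positive probability. -/
def arcRel {Ω : Type*} [MeasurableSpace Ω] (μ : Measure Ω) {d : ℕ}
    (A : Ω → Fin d → Fin d → EReal) (i j : Fin d) : Prop :=
  μ {ω | A ω i j ≠ ⊥} ≠ 0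

/-- `c` is a strongly connected component of the graph with arc relation `r`
(the mutual-reachability class of some node; nodes on no circuit are alone in their class). -/
def IsSCC {d : ℕ} (r : Fin d → Fin d → Prop) (c : Set (Fin d)) : Prop :=
  ∃ i, c = {j | Relation.ReflTransGen r i j ∧ Relation.ReflTransGen r j i}

/-- `i → c` : the node `i` reaches the component `c`. -/
def nodeReach {d : ℕ} (r : Fin d → Fin d → Prop) (i : Fin d) (c : Set (Fin d)) : Prop :=
  ∃ j ∈ c, Relation.ReflTransGen r i j

/-- `c → c'` : the component `c` reaches the component `c'`. -/
def sccReach {d : ℕ} (r : Fin d → Fin d → Prop) (c c' : Set (Fin d)) : Prop :=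
  ∃ i ∈ c, nodeReach r i c'

/-- `γ^{[c]} = max { γ^{(c')} : c → c' }`, where `γ` assigns to each s.c.c. its
maximal Lyapunov exponent. -/
def gammaBrack {d : ℕ} (r : Fin d → Fin d → Prop) (γ : Set (Fin d) → EReal)
    (c : Set (Fin d)) : EReal :=
  ⨆ c', ⨆ (_ : IsSCC r c' ∧ sccReach r c c'), γ c'

/-- The set of nodes `H_c = {c}` : nodes `i` with `c → i → c̃` for some s.c.c. `c̃`
realizing `γ^{(c̃)} = γ^{[c]}`. -/
def Hset {d : ℕ} (r : Fin d → Fin d → Prop) (γ : Set (Fin d) → EReal)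
    (c : Set (Fin d)) : Set (Fin d) :=
  {i | ∃ ct, IsSCC r ct ∧ (∃ j ∈ c, Relation.ReflTransGen r j i) ∧ nodeReach r i ct ∧
    γ ct = gammaBrack r γ c}

/-- `max { γ^{(c)} : c s.c.c. with i → c }`. -/
def limFormula {d : ℕ} (r : Fin d → Fin d → Prop) (γ : Set (Fin d) → EReal) (i : Fin d) : EReal :=
  ⨆ c, ⨆ (_ : IsSCC r c ∧ nodeReach r i c), γ c

/-!
Comparing `x(n+1,0)` with the product started one step later gives `L ≤ L ∘ θ`, so by ergodicity
`L` is a constant vector `l`.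

Lower bound. If `(i, j)` is an arc of `𝒢(A)`, then by Poincaré recurrence `A_{ij}(n)` exceeds a
fixed real number infinitely often, whence `l j ≤ l i`: the limit decreases along paths. Deleting
entries decreases `x(n,0)`, so `γ^{(c)} ≤ max_{j ∈ c} l j` for every component `c`, and this is at
most `l i` when `i → c`.

Upper bound. Among the nodes `j` reachable from `i` with `l i ≤ l j` take one that is as far
downstream as possible, and let `c` be its component. Every arc from `k ∈ c` to `j ∉ c` satisfies
`l j < l k`. By integrability the positive part of `A_{kj}(n)` is `o(n)`, so eventually
`A_{kj}(n) + x_j(n,0) < x_k(n+1,0)`: from some time on the maxima that define the coordinates of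
`x` in `c` are attained inside `c`, and `x` grows there at the rate `γ^{(c)}`.
-/

/-! ### Growth rates of extended real sequences -/

/-- The sequence `u` has the linear growth rate `a`, that is, `u n / n → a`. -/
def HasGrowthRate (u : ℕ → EReal) (a : EReal) : Prop :=
  Tendsto (fun n => mpScale n (u n)) atTop (𝓝 a)

/-- The positive part of `e n` is `o(n)`, that is, `limsup e n / n ≤ 0`: the error terms that do
not affect upper bounds on growth rates. -/
def GrowsSublinearly (e : ℕ → EReal) : Prop :=
  ∀ ε : ℝ, 0 < ε → ∀ᶠ n : ℕ in atTop, e n ≤ ((ε * n : ℝ) : EReal)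

lemma growsSublinearly_const {C : EReal} (hC : C ≠ ⊤) : GrowsSublinearly fun _ => C := by
  intro ε hε
  have h_large : ∀ᶠ n : ℕ in atTop, C.toReal ≤ ε * n :=
    (tendsto_natCast_atTop_atTop.const_mul_atTop hε).eventually_ge_atTop _
  filter_upwards [h_large] with n hn
  exact (EReal.le_coe_toReal hC).trans (EReal.coe_le_coe hn)

lemma mpScale_eq_div (n : ℕ) (x : EReal) : mpScale n x = x / (n : ℝ) := by
  rw [mpScale, EReal.div_eq_inv_mul, EReal.coe_inv]

namespace HasGrowthRate

variable {u w e : ℕ → EReal} {a b : EReal} {r : ℝ}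

lemma eventually_lt (hu : HasGrowthRate u a) (har : a < r) :
    ∀ᶠ n : ℕ in atTop, u n < ((r * n : ℝ) : EReal) := by
  filter_upwards [hu.eventually_lt_const har, eventually_gt_atTop 0] with n hn hpos
  rwa [mpScale_eq_div, EReal.div_lt_iff (by exact_mod_cast hpos) (EReal.coe_ne_top _),
    ← EReal.coe_mul] at hn

lemma eventually_gt (hu : HasGrowthRate u a) (hra : r < a) :
    ∀ᶠ n : ℕ in atTop, ((r * n : ℝ) : EReal) < u n := by
  filter_upwards [hu.eventually_const_lt hra, eventually_gt_atTop 0] with n hn hpos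
  rwa [mpScale_eq_div, EReal.lt_div_iff (by exact_mod_cast hpos) (EReal.coe_ne_top _),
    ← EReal.coe_mul] at hn

lemma comp_add_nat (hu : HasGrowthRate u a) (p : ℕ) : HasGrowthRate (fun n => u (n + p)) a := by
  have h_ratio : Tendsto (fun n : ℕ => (((n + p : ℕ) / n : ℝ) : EReal)) atTop (𝓝 (1 : ℝ)) := by
    refine (continuous_coe_real_ereal.tendsto _).comp ?_
    simpa [add_comm] using tendsto_add_mul_div_add_mul_atTop_nhds (p : ℝ) 0 1 one_ne_zero
  have h_mul := EReal.Tendsto.mul h_ratio (hu.comp (tendsto_add_atTop_nat p)) (by simp) (by simp)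
    (.inl (EReal.coe_ne_bot _)) (.inl (EReal.coe_ne_top _))
  rw [EReal.coe_one, one_mul] at h_mul
  refine h_mul.congr' ?_
  filter_upwards [eventually_gt_atTop 0] with n hn
  have hnp : ((n + p : ℕ) : ℝ) ≠ 0 := by positivity
  rw [Function.comp_apply, mpScale, mpScale, ← mul_assoc, ← EReal.coe_mul, div_mul_eq_mul_div,
    mul_inv_cancel₀ hnp, one_div]

lemma le_of_frequently_le_add (hu : HasGrowthRate u a) (hw : HasGrowthRate w b)
    (he : GrowsSublinearly e) (h : ∃ᶠ n in atTop, u n ≤ w n + e n) : a ≤ b := by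
  by_contra! hba
  obtain ⟨s, hbs, hsa⟩ := EReal.lt_iff_exists_real_btwn.1 hba
  obtain ⟨t, hst, hta⟩ := EReal.lt_iff_exists_real_btwn.1 hsa
  have hst : 0 < t - s := sub_pos.2 (EReal.coe_lt_coe_iff.1 hst)
  obtain ⟨n, hle, hun, hwn, hen⟩ := (h.and_eventually
    ((hu.eventually_gt hta).and ((hw.eventually_lt hbs).and (he _ hst)))).exists
  refine (hun.trans_le (hle.trans (add_le_add hwn.le hen))).ne ?_
  rw [← EReal.coe_add, ← add_mul, add_sub_cancel]

lemma le_of_frequently_le (hu : HasGrowthRate u a) (hw : HasGrowthRate w b)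
    (h : ∃ᶠ n in atTop, u n ≤ w n) : a ≤ b :=
  hu.le_of_frequently_le_add hw (growsSublinearly_const EReal.zero_ne_top)
    (h.mono fun n hn => by rwa [add_zero])

lemma exists_mem_le {ι : Type*} {s : Set ι} (hs : s.Finite) {v : ι → ℕ → EReal} {b : ι → EReal}
    (hu : HasGrowthRate u a) (hv : ∀ i ∈ s, HasGrowthRate (v i) (b i))
    (h : ∀ n, ∃ i ∈ s, u n ≤ v i n) : ∃ i ∈ s, a ≤ b i := by
  obtain ⟨i, hi, hfreq⟩ := (frequently_exists_finite hs).1 (Frequently.of_forall (f := atTop) h)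
  exact ⟨i, hi, hu.le_of_frequently_le (hv i hi) hfreq⟩

end HasGrowthRate

/-! ### Max-plus products -/

lemma iSup_ne_top_of_finite {ι : Type*} [Finite ι] {v : ι → EReal} (h : ∀ i, v i ≠ ⊤) :
    ⨆ i, v i ≠ ⊤ := by
  cases isEmpty_or_nonempty ι
  · rw [iSup_of_empty]
    exact bot_ne_top
  · obtain ⟨i, hi⟩ := exists_eq_ciSup_of_finite (f := v)
    exact hi ▸ h i

section MaxPlus

variable {d : ℕ} {c : Set (Fin d)} {M : Fin d → Fin d → EReal} {f : ℕ → Fin d → Fin d → EReal}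

lemma add_le_mpVec (M : Fin d → Fin d → EReal) (v : Fin d → EReal) (i j : Fin d) :
    M i j + v j ≤ mpVec M v i :=
  le_iSup (fun j => M i j + v j) j

lemma xvec_ne_top (hf : ∀ n i j, f n i j ≠ ⊤) (n : ℕ) (i : Fin d) : xvec f n i ≠ ⊤ := by
  induction n generalizing i with
  | zero => exact EReal.zero_ne_top
  | succ n ih => exact iSup_ne_top_of_finite fun j => EReal.add_ne_top (hf n i j) (ih j)

lemma mpRestrict_le (c : Set (Fin d)) (M : Fin d → Fin d → EReal) (i j : Fin d) :
    mpRestrict c M i j ≤ M i j := by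
  rw [mpRestrict]
  split_ifs
  · exact le_rfl
  · exact bot_le

lemma mpRestrict_univ (M : Fin d → Fin d → EReal) : mpRestrict Set.univ M = M := by
  funext i j
  simp [mpRestrict]

lemma xvec_mpRestrict_le (c : Set (Fin d)) (f : ℕ → Fin d → Fin d → EReal) (n : ℕ) (i : Fin d) :
    xvec (fun m => mpRestrict c (f m)) n i ≤ xvec f n i := by
  induction n generalizing i with
  | zero => exact le_rfl
  | succ n ih => exact iSup_mono fun j => add_le_add (mpRestrict_le c _ i j) (ih j)

lemma mpVec_mpRestrict_le_add {u v : Fin d → EReal} {C : EReal} (h : ∀ j ∈ c, u j ≤ v j + C)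
    (i : Fin d) : mpVec (mpRestrict c M) u i ≤ mpVec (mpRestrict c M) v i + C := by
  refine iSup_le fun j => ?_
  by_cases hj : j ∈ c
  · calc mpRestrict c M i j + u j
        ≤ mpRestrict c M i j + (v j + C) := by gcongr; exact h j hj
      _ = mpRestrict c M i j + v j + C := (add_assoc _ _ _).symm
      _ ≤ mpVec (mpRestrict c M) v i + C := by gcongr; exact add_le_mpVec _ v i j
  · simp [mpRestrict, hj]

lemma mpVec_le_mpVec_mpRestrict {v : Fin d → EReal} {k : Fin d} (hk : k ∈ c)
    (h : ∀ j ∉ c, M k j + v j < mpVec M v k) : mpVec M v k ≤ mpVec (mpRestrict c M) v k := by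
  have : Nonempty (Fin d) := ⟨k⟩
  obtain ⟨j, hj⟩ : ∃ j, M k j + v j = mpVec M v k := exists_eq_ciSup_of_finite
  have hjc : j ∈ c := by
    by_contra hjc
    exact (h j hjc).ne hj
  calc mpVec M v k = mpRestrict c M k j + v j := by simp [mpRestrict, hk, hjc, hj]
    _ ≤ mpVec (mpRestrict c M) v k := add_le_mpVec _ v k j

lemma le_xvec_mpRestrict_add {v : ℕ → Fin d → EReal} {C : EReal} (h_zero : ∀ i ∈ c, v 0 i ≤ C)
    (h_succ : ∀ n, ∀ i ∈ c, v (n + 1) i ≤ mpVec (mpRestrict c (f n)) (v n) i) (n : ℕ) :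
    ∀ i ∈ c, v n i ≤ xvec (fun m => mpRestrict c (f m)) n i + C := by
  induction n with
  | zero => simpa [xvec] using h_zero
  | succ n ih => exact fun i hi => (h_succ n i hi).trans (mpVec_mpRestrict_le_add ih i)

lemma xvec_succ_le_add {C : EReal} (h : ∀ i, xvec f 1 i ≤ C) (n : ℕ) (i : Fin d) :
    xvec f (n + 1) i ≤ xvec (fun m => f (m + 1)) n i + C := by
  simpa only [mpRestrict_univ] using
    le_xvec_mpRestrict_add (c := Set.univ) (f := fun m => f (m + 1))
      (v := fun n => xvec f (n + 1)) (fun i _ => h i)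
      (fun n i _ => by rw [mpRestrict_univ]; exact le_rfl) n i trivial

/-- `max_{i ∈ c} x_i^{(c)}(n, 0)`, where `x^{(c)}` is built from the restrictions of the matrices
`f m` to `c`; its growth rate is the Lyapunov exponent `γ^{(c)}`. -/
def xmaxOn (c : Set (Fin d)) (f : ℕ → Fin d → Fin d → EReal) (n : ℕ) : EReal :=
  ⨆ i, ⨆ (_ : i ∈ c), xvec (fun m => mpRestrict c (f m)) n i

lemma exists_mem_xmaxOn_le (hc : c.Nonempty) (f : ℕ → Fin d → Fin d → EReal) (n : ℕ) :
    ∃ j ∈ c, xmaxOn c f n ≤ xvec f n j := by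
  have : Nonempty c := hc.to_subtype
  obtain ⟨j, hj⟩ := exists_eq_ciSup_of_finite
    (f := fun j : c => xvec (fun m => mpRestrict c (f m)) n j)
  refine ⟨j, j.2, ?_⟩
  rw [xmaxOn, iSup_subtype', ← hj]
  exact xvec_mpRestrict_le c f n j

/-! ### Growth rates of a convergent max-plus recursion -/

variable {l : Fin d → EReal} {g : EReal}

lemma growthRate_le_of_frequently_arc (hl : ∀ i, HasGrowthRate (fun n => xvec f n i) (l i))
    {i j : Fin d} {r : ℝ} (h : ∃ᶠ n in atTop, (r : EReal) ≤ f n i j) : l j ≤ l i := by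
  refine (hl j).le_of_frequently_le_add ((hl i).comp_add_nat 1)
    (growsSublinearly_const (EReal.coe_ne_top (-r))) (h.mono fun n hn => ?_)
  calc xvec f n j = r + xvec f n j + (-r : ℝ) := by
        rw [add_right_comm, ← EReal.coe_add, add_neg_cancel, EReal.coe_zero, zero_add]
    _ ≤ f n i j + xvec f n j + (-r : ℝ) := by gcongr
    _ ≤ xvec f (n + 1) i + (-r : ℝ) := by gcongr; exact add_le_mpVec _ _ i j

lemma eventually_add_lt_xvec_succ (hl : ∀ i, HasGrowthRate (fun n => xvec f n i) (l i))
    {k j : Fin d} (hf : GrowsSublinearly fun n => f n k j) (hlt : l j < l k) :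
    ∀ᶠ n in atTop, f n k j + xvec f n j < xvec f (n + 1) k := by
  by_contra h
  refine hlt.not_ge (((hl k).comp_add_nat 1).le_of_frequently_le_add (hl j) hf ?_)
  exact (not_eventually.1 h).mono fun n hn => (not_lt.1 hn).trans_eq (add_comm _ _)

lemma growthRate_le_of_eventually_add_lt (hf : ∀ n i j, f n i j ≠ ⊤) {i : Fin d} (hi : i ∈ c)
    (hl : HasGrowthRate (fun n => xvec f n i) (l i))
    (hg : ∀ p, HasGrowthRate (xmaxOn c fun m => f (m + p)) g)
    (hexit : ∀ᶠ n in atTop, ∀ k ∈ c, ∀ j ∉ c, f n k j + xvec f n j < xvec f (n + 1) k) :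
    l i ≤ g := by
  obtain ⟨p, hp⟩ := eventually_atTop.1 hexit
  have h_bound (n : ℕ) : xvec f (n + p) i ≤
      xvec (fun m => mpRestrict c (f (m + p))) n i + ⨆ k, xvec f p k := by
    refine le_xvec_mpRestrict_add (f := fun m => f (m + p)) (v := fun n => xvec f (n + p))
      (fun k _ => ?_) (fun n k hk => ?_) n i hi
    · simpa only [zero_add] using le_iSup (xvec f p) k
    · rw [Nat.add_right_comm]
      exact mpVec_le_mpVec_mpRestrict hk (hp (n + p) (Nat.le_add_left p n) k hk)
  refine (hl.comp_add_nat p).le_of_frequently_le_add (hg p)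
    (growsSublinearly_const (iSup_ne_top_of_finite (xvec_ne_top hf p)))
    (Frequently.of_forall fun n => (h_bound n).trans ?_)
  gcongr
  exact le_iSup₂_of_le i hi le_rfl

end MaxPlus

/-! ### Ergodic theory -/

section ErgodicTheory

variable {Ω : Type*} [MeasurableSpace Ω] {μ : Measure Ω} {θ : Ω → Ω}

lemma ae_forall_iterate (hθ : MeasurePreserving θ μ μ) {P : Ω → Prop} (h : ∀ᵐ ω ∂μ, P ω) :
    ∀ᵐ ω ∂μ, ∀ n : ℕ, P (θ^[n] ω) :=
  ae_all_iff.2 fun n => (hθ.iterate n).quasiMeasurePreserving.ae h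

lemma ae_eq_const_of_ae_le_comp [IsFiniteMeasure μ] {X : Type*} [Nonempty X] [LinearOrder X]
    [TopologicalSpace X] [OrderTopology X] [SecondCountableTopology X] [MeasurableSpace X]
    [OpensMeasurableSpace X] (hθ : Ergodic θ μ) {φ : Ω → X} (hφ : AEMeasurable φ μ)
    (h : φ ≤ᵐ[μ] φ ∘ θ) : ∃ a, φ =ᵐ[μ] Function.const Ω a := by
  have : HasCountableSeparatingOn X (· ∈ Set.range Set.Ioi) Set.univ := .range_Ioi
  refine exists_eventuallyEq_const_of_forall_separating (· ∈ Set.range Set.Ioi) ?_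
  rintro _ ⟨a, rfl⟩
  have h_sub : φ ⁻¹' Set.Ioi a ≤ᵐ[μ] θ ⁻¹' (φ ⁻¹' Set.Ioi a) :=
    h.mono fun ω hω hmem => lt_of_lt_of_le hmem hω
  rcases hθ.ae_empty_or_univ_of_ae_le_preimage (hφ.nullMeasurable measurableSet_Ioi) h_sub
    with h_empty | h_univ
  · exact .inr (eventuallyEq_empty.1 h_empty)
  · exact .inl (eventuallyEq_univ.1 h_univ)

lemma ae_isLittleO_iterate [IsProbabilityMeasure μ] {E : Type*} [NormedAddCommGroup E]
    (hθ : MeasurePreserving θ μ μ) {φ : Ω → E} (hφ : Integrable φ μ) :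
    ∀ᵐ ω ∂μ, (fun n => φ (θ^[n] ω)) =o[atTop] (fun n : ℕ => (n : ℝ)) := by
  let _ : MeasureSpace Ω := ⟨μ⟩
  have : IsProbabilityMeasure (volume : Measure Ω) := ‹IsProbabilityMeasure μ›
  have h_rate (N : ℕ) : ∀ᵐ ω ∂μ, ∀ᶠ n : ℕ in atTop, (N + 1) * ‖φ (θ^[n] ω)‖ ≤ n := by
    have h_int : Integrable (fun ω => (N + 1) * ‖φ ω‖) μ := hφ.norm.const_mul _
    have h_meas (n : ℕ) : μ (θ^[n] ⁻¹' {ω | (N + 1) * ‖φ ω‖ ∈ Set.Ioi (n : ℝ)}) =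
        μ {ω | (N + 1) * ‖φ ω‖ ∈ Set.Ioi (n : ℝ)} :=
      (hθ.iterate n).measure_preimage (h_int.aemeasurable.nullMeasurable measurableSet_Ioi)
    have h_sum : ∑' n : ℕ, μ (θ^[n] ⁻¹' {ω | (N + 1) * ‖φ ω‖ ∈ Set.Ioi (n : ℝ)}) ≠ ⊤ := by
      simp_rw [h_meas]
      exact (tsum_prob_mem_Ioi_lt_top h_int fun ω => by positivity).ne
    filter_upwards [ae_eventually_notMem h_sum] with ω hω
    exact hω.mono fun n hn => not_lt.1 hn
  filter_upwards [ae_all_iff.2 h_rate] with ω hω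
  refine Asymptotics.isLittleO_iff.2 fun ε hε => ?_
  obtain ⟨N, hN⟩ := exists_nat_one_div_lt hε
  filter_upwards [hω N] with n hn
  rw [Real.norm_natCast]
  calc ‖φ (θ^[n] ω)‖ ≤ 1 / (N + 1) * n := by
        rwa [one_div, ← div_eq_inv_mul, le_div_iff₀' (by positivity)]
    _ ≤ ε * n := by gcongr

lemma ae_frequently_ge_of_ne_bot (hθ : Conservative θ μ) {φ : Ω → EReal} (hφ : AEMeasurable φ μ) :
    ∀ᵐ ω ∂μ, φ ω ≠ ⊥ → ∃ r : ℝ, ∃ᶠ n in atTop, (r : EReal) ≤ φ (θ^[n] ω) := by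
  have h_rec (q : ℚ) := hθ.ae_mem_imp_frequently_image_mem
    (hφ.nullMeasurable (measurableSet_Ici (a := ((q : ℝ) : EReal))))
  filter_upwards [ae_all_iff.2 h_rec] with ω hω hne
  obtain ⟨q, -, hq⟩ := EReal.lt_iff_exists_rat_btwn.1 (bot_lt_iff_ne_bot.2 hne)
  exact ⟨q, hω q hq.le⟩

end ErgodicTheory

/-! ### The limit vector of a random max-plus recursion -/

lemma exists_reflTransGen_maximal {V : Type*} [Finite V] (r : V → V → Prop) {P : V → Prop} {i : V}
    (hi : P i) : ∃ j, Relation.ReflTransGen r i j ∧ P j ∧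
      ∀ k, Relation.ReflTransGen r j k → P k → Relation.ReflTransGen r k j := by
  let _ : Preorder V :=
    { le := Relation.ReflTransGen r
      le_refl := fun _ => .refl
      le_trans := fun _ _ _ => .trans }
  obtain ⟨j, hij, hj, hmax⟩ := (Set.toFinite {j | P j}).exists_le_maximal hi
  exact ⟨j, hij, hj, fun k hjk hk => hmax hk hjk⟩

/-- The sequence of observations `A(n) = A ∘ θ^n` along the orbit of `ω`; it is the stationary
sequence `(A(n))_{n ≥ 0}` when `θ` preserves the measure. -/
def orbitSeq {Ω M : Type*} (θ : Ω → Ω) (A : Ω → M) (ω : Ω) (n : ℕ) : M :=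
  A (θ^[n] ω)

lemma orbitSeq_add {Ω M : Type*} (θ : Ω → Ω) (A : Ω → M) (ω : Ω) (p : ℕ) :
    (fun m => orbitSeq θ A ω (m + p)) = orbitSeq θ A (θ^[p] ω) := by
  funext m
  simp only [orbitSeq, Function.iterate_add_apply]

section RandomRecursion

variable {d : ℕ} {Ω : Type*} [MeasurableSpace Ω] {μ : Measure Ω} {θ : Ω → Ω}
  {A : Ω → Fin d → Fin d → EReal} {l : Fin d → EReal} {γ : Set (Fin d) → EReal}

lemma measurable_xvec_orbitSeq (hθ : Measurable θ) (hA : Measurable A) (n : ℕ) (i : Fin d) :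
    Measurable fun ω => xvec (orbitSeq θ A ω) n i := by
  induction n generalizing i with
  | zero => exact measurable_const
  | succ n ih =>
    refine Measurable.iSup fun j => Measurable.add ?_ (ih j)
    exact (hA.comp (hθ.iterate n)).eval.eval

lemma ae_le_comp_of_hasGrowthRate (hθ : MeasurePreserving θ μ μ) (hA : ∀ ω i j, A ω i j ≠ ⊤)
    {L : Ω → Fin d → EReal}
    (hL : ∀ᵐ ω ∂μ, ∀ i, HasGrowthRate (fun n => xvec (orbitSeq θ A ω) n i) (L ω i)) :
    ∀ᵐ ω ∂μ, ∀ i, L ω i ≤ L (θ ω) i := by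
  filter_upwards [hL, hθ.quasiMeasurePreserving.ae hL] with ω hω hθω i
  have h_fin : ⨆ k, xvec (orbitSeq θ A ω) 1 k ≠ ⊤ :=
    iSup_ne_top_of_finite (xvec_ne_top (fun _ => hA _) 1)
  exact ((hω i).comp_add_nat 1).le_of_frequently_le_add (hθω i) (growsSublinearly_const h_fin)
    (Frequently.of_forall fun n => xvec_succ_le_add (le_iSup _) n i)

lemma exists_deterministic_growthRate [IsFiniteMeasure μ] (hθ : Ergodic θ μ) (hA : Measurable A)
    (hA_top : ∀ ω i j, A ω i j ≠ ⊤) {L : Ω → Fin d → EReal}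
    (hL : ∀ᵐ ω ∂μ, ∀ i, HasGrowthRate (fun n => xvec (orbitSeq θ A ω) n i) (L ω i)) :
    ∃ l : Fin d → EReal, ∀ᵐ ω ∂μ, L ω = l := by
  have : TopologicalSpace.MetrizableSpace EReal :=
    TopologicalSpace.metrizableSpace_of_t3_secondCountable EReal
  have h_const (i : Fin d) : ∃ a, (L · i) =ᵐ[μ] Function.const Ω a := by
    refine ae_eq_const_of_ae_le_comp hθ ?_
      ((ae_le_comp_of_hasGrowthRate hθ.toMeasurePreserving hA_top hL).mono fun ω hω => hω i)
    exact aemeasurable_of_tendsto_metrizable_ae'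
      (fun n => ((measurable_xvec_orbitSeq hθ.measurable hA n i).const_mul _).aemeasurable)
      (hL.mono fun ω hω => hω i)
  choose l hl using h_const
  exact ⟨l, (ae_all_iff.2 hl).mono fun ω hω => funext hω⟩

lemma growthRate_le_of_reflTransGen (hθ : Conservative θ μ) (hA : Measurable A)
    (hl : ∀ᵐ ω ∂μ, ∀ i, HasGrowthRate (fun n => xvec (orbitSeq θ A ω) n i) (l i)) {i j : Fin d}
    (hij : Relation.ReflTransGen (arcRel μ A) i j) : l j ≤ l i := by
  induction hij with
  | refl => exact le_rfl
  | @tail k j _ hkj ih =>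
    obtain ⟨ω, hne, hω, hrec⟩ := ((frequently_ae_iff.2 hkj).and_eventually
      (hl.and (ae_frequently_ge_of_ne_bot hθ hA.eval.eval.aemeasurable))).exists
    obtain ⟨r, hr⟩ := hrec hne
    exact (growthRate_le_of_frequently_arc hω hr).trans ih

lemma limFormula_le_growthRate [NeZero μ] (hθ : Conservative θ μ) (hA : Measurable A)
    (hγ : ∀ c, IsSCC (arcRel μ A) c →
      ∀ᵐ ω ∂μ, HasGrowthRate (xmaxOn c (orbitSeq θ A ω)) (γ c))
    (hl : ∀ᵐ ω ∂μ, ∀ i, HasGrowthRate (fun n => xvec (orbitSeq θ A ω) n i) (l i)) (i : Fin d) :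
    limFormula (arcRel μ A) γ i ≤ l i := by
  refine iSup₂_le ?_
  rintro c ⟨hc, j, hj, hij⟩
  obtain ⟨ω, hω, hγω⟩ := (hl.and (hγ c hc)).exists
  obtain ⟨k, hk, hγk⟩ := hγω.exists_mem_le c.toFinite (fun k _ => hω k)
    (exists_mem_xmaxOn_le ⟨j, hj⟩ _)
  obtain ⟨m, rfl⟩ := hc
  exact hγk.trans (growthRate_le_of_reflTransGen hθ hA hl (hij.trans (hj.2.trans hk.1)))

lemma le_coe_toReal_iSup_sup_zero {M : Fin d → Fin d → EReal} (hM : ∀ i j, M i j ≠ ⊤)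
    (i j : Fin d) : M i j ≤ (((⨆ i, ⨆ j, M i j) ⊔ 0).toReal : EReal) := by
  have h_fin : (⨆ i, ⨆ j, M i j) ⊔ 0 ≠ ⊤ :=
    (max_lt (iSup_ne_top_of_finite fun i => iSup_ne_top_of_finite (hM i)).lt_top
      EReal.zero_lt_top).ne
  exact (le_sup_of_le_left (le_iSup₂ i j)).trans (EReal.le_coe_toReal h_fin)

lemma ae_growsSublinearly_entry [IsProbabilityMeasure μ] (hθ : MeasurePreserving θ μ μ)
    (hA : ∀ ω i j, A ω i j ≠ ⊤)
    (hint : Integrable (fun ω => ((⨆ i, ⨆ j, A ω i j) ⊔ 0).toReal) μ) :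
    ∀ᵐ ω ∂μ, ∀ i j, GrowsSublinearly fun n => orbitSeq θ A ω n i j := by
  filter_upwards [ae_isLittleO_iterate hθ hint] with ω hω i j ε hε
  filter_upwards [hω.bound hε] with n hn
  rw [Real.norm_natCast] at hn
  exact (le_coe_toReal_iSup_sup_zero (hA _) i j).trans
    (EReal.coe_le_coe ((Real.le_norm_self _).trans hn))

lemma ae_eventually_add_lt_xvec_succ [IsProbabilityMeasure μ] (hθ : MeasurePreserving θ μ μ)
    (hA : ∀ ω i j, A ω i j ≠ ⊤)
    (hint : Integrable (fun ω => ((⨆ i, ⨆ j, A ω i j) ⊔ 0).toReal) μ)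
    (hl : ∀ᵐ ω ∂μ, ∀ i, HasGrowthRate (fun n => xvec (orbitSeq θ A ω) n i) (l i)) {k j : Fin d}
    (hk : l k ≠ ⊥) (hkj : arcRel μ A k j → l j < l k) :
    ∀ᵐ ω ∂μ, ∀ᶠ n in atTop, orbitSeq θ A ω n k j + xvec (orbitSeq θ A ω) n j <
      xvec (orbitSeq θ A ω) (n + 1) k := by
  by_cases harc : arcRel μ A k j
  · filter_upwards [hl, ae_growsSublinearly_entry hθ hA hint] with ω hω h_sub
    exact eventually_add_lt_xvec_succ hω (h_sub k j) (hkj harc)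
  · have h_bot : ∀ᵐ ω ∂μ, A ω k j = ⊥ := ae_iff.2 (not_not.1 harc)
    obtain ⟨r, -, hr⟩ := EReal.lt_iff_exists_real_btwn.1 (bot_lt_iff_ne_bot.2 hk)
    filter_upwards [hl, ae_forall_iterate hθ h_bot] with ω hω h_bot
    filter_upwards [((hω k).comp_add_nat 1).eventually_gt hr] with n hn
    rw [orbitSeq, h_bot n, EReal.bot_add]
    exact bot_le.trans_lt hn

lemma growthRate_le_of_exits_lt [IsProbabilityMeasure μ] (hθ : MeasurePreserving θ μ μ)
    (hA : ∀ ω i j, A ω i j ≠ ⊤)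
    (hint : Integrable (fun ω => ((⨆ i, ⨆ j, A ω i j) ⊔ 0).toReal) μ)
    (hl : ∀ᵐ ω ∂μ, ∀ i, HasGrowthRate (fun n => xvec (orbitSeq θ A ω) n i) (l i))
    {c : Set (Fin d)} {g : EReal} (hg : ∀ᵐ ω ∂μ, HasGrowthRate (xmaxOn c (orbitSeq θ A ω)) g)
    (hexit : ∀ k ∈ c, ∀ j ∉ c, arcRel μ A k j → l j < l k)
    {i : Fin d} (hi : i ∈ c) (hmin : ∀ k ∈ c, l i ≤ l k) : l i ≤ g := by
  rcases eq_or_ne (l i) ⊥ with h_bot | h_bot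
  · exact h_bot ▸ bot_le
  have h_exit : ∀ᵐ ω ∂μ, ∀ k ∈ c, ∀ j ∉ c, ∀ᶠ n in atTop,
      orbitSeq θ A ω n k j + xvec (orbitSeq θ A ω) n j < xvec (orbitSeq θ A ω) (n + 1) k := by
    simp only [eventually_imp_distrib_left, ae_all_iff]
    exact fun k hk j hj => ae_eventually_add_lt_xvec_succ hθ hA hint hl
      (ne_bot_of_le_ne_bot h_bot (hmin k hk)) (hexit k hk j hj)
  obtain ⟨ω, hω, hgω, h_exit⟩ := (hl.and ((ae_forall_iterate hθ hg).and h_exit)).exists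
  refine growthRate_le_of_eventually_add_lt (f := orbitSeq θ A ω) (fun _ => hA _) hi (hω i)
    (fun p => ?_) ?_
  · rw [orbitSeq_add]
    exact hgω p
  · simpa only [eventually_all, eventually_imp_distrib_left] using h_exit

lemma growthRate_le_limFormula [IsProbabilityMeasure μ] (hθ : MeasurePreserving θ μ μ)
    (hA : Measurable A) (hA_top : ∀ ω i j, A ω i j ≠ ⊤)
    (hint : Integrable (fun ω => ((⨆ i, ⨆ j, A ω i j) ⊔ 0).toReal) μ)
    (hγ : ∀ c, IsSCC (arcRel μ A) c →
      ∀ᵐ ω ∂μ, HasGrowthRate (xmaxOn c (orbitSeq θ A ω)) (γ c))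
    (hl : ∀ᵐ ω ∂μ, ∀ i, HasGrowthRate (fun n => xvec (orbitSeq θ A ω) n i) (l i)) (i : Fin d) :
    l i ≤ limFormula (arcRel μ A) γ i := by
  obtain ⟨j, hij, hlij, hmax⟩ := exists_reflTransGen_maximal (arcRel μ A) (P := (l i ≤ l ·)) le_rfl
  set c := {k | Relation.ReflTransGen (arcRel μ A) j k ∧ Relation.ReflTransGen (arcRel μ A) k j}
  have hc : IsSCC (arcRel μ A) c := ⟨j, rfl⟩
  have hjc : j ∈ c := ⟨.refl, .refl⟩
  have hmin : ∀ k ∈ c, l j ≤ l k := fun k hk =>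
    growthRate_le_of_reflTransGen hθ.conservative hA hl hk.2
  have hexit : ∀ k ∈ c, ∀ m ∉ c, arcRel μ A k m → l m < l k := by
    intro k hk m hm hkm
    have hjm := hk.1.tail hkm
    have hlm : l m < l i := not_le.1 fun hle => hm ⟨hjm, hmax m hjm hle⟩
    exact hlm.trans_le (hlij.trans (hmin k hk))
  calc l i ≤ l j := hlij
    _ ≤ γ c := growthRate_le_of_exits_lt hθ hA_top hint hl (hγ c hc) hexit hjc hmin
    _ ≤ limFormula (arcRel μ A) γ i :=
      le_iSup₂_of_le (f := fun c _ => γ c) c ⟨hc, j, hjc, hij⟩ le_rfl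

end RandomRecursion

theorem x_limit_deterministic_and_formula_general
    {d : ℕ} {Ω : Type*} [MeasurableSpace Ω] (μ : Measure Ω) [IsProbabilityMeasure μ]
    (θ : Ω → Ω) (hθ : Ergodic θ μ)
    (A : Ω → Fin d → Fin d → EReal) (hA : Measurable A)
    (hnotop : ∀ ω i j, A ω i j ≠ ⊤)
    (hint : Integrable (fun ω => ((⨆ i, ⨆ j, A ω i j) ⊔ 0).toReal) μ)
    (γ : Set (Fin d) → EReal)
    (hγ : ∀ c : Set (Fin d), IsSCC (arcRel μ A) c →
      ∀ᵐ ω ∂μ, Tendsto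
        (fun n => mpScale n (⨆ i, ⨆ (_ : i ∈ c), xvec (fun m => mpRestrict c (A (θ^[m] ω))) n i))
        atTop (𝓝 (γ c)))
    (L : Ω → Fin d → EReal)
    (hL : ∀ᵐ ω ∂μ, ∀ i, Tendsto (fun n => mpScale n (xvec (fun m => A (θ^[m] ω)) n i))
      atTop (𝓝 (L ω i))) :
    ∀ i, ∀ᵐ ω ∂μ, L ω i = limFormula (arcRel μ A) γ i := by
  have hθ_mp := hθ.toMeasurePreserving
  obtain ⟨l, hLl⟩ := exists_deterministic_growthRate hθ hA hnotop hL
  have hl : ∀ᵐ ω ∂μ, ∀ i, HasGrowthRate (fun n => xvec (orbitSeq θ A ω) n i) (l i) := by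
    filter_upwards [hL, hLl] with ω hω hωl
    exact hωl ▸ hω
  intro i
  filter_upwards [hLl] with ω hω
  rw [hω]
  exact le_antisymm (growthRate_le_limFormula hθ_mp hA hnotop hint hγ hl i)
    (limFormula_le_growthRate hθ_mp.conservative hA hγ hl i)

/-- **Theorem (necessary condition, left products).**
If `(A(n))_{n∈ℤ}` is stationary ergodic, a.s. with a finite entry on each row, the positive
part of `max_{ij} A_{ij}(0)` integrable, and `(1/n) x(n,0)` converges a.s. (to a possibly
random vector `L`), then the limit is deterministic: a.s.
`L ω i = max { γ^{(c)} : i → c }` for every `i`. -/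
theorem x_limit_deterministic_and_formula
    {d : ℕ} {Ω : Type*} [MeasurableSpace Ω] (μ : Measure Ω) [IsProbabilityMeasure μ]
    (θ θ' : Ω → Ω) (hθ : Ergodic θ μ)
    (hinv : ∀ ω, θ (θ' ω) = ω ∧ θ' (θ ω) = ω)
    (A : Ω → Fin d → Fin d → EReal) (hA : Measurable A)
    (hnotop : ∀ ω i j, A ω i j ≠ ⊤)
    (hrow : ∀ᵐ ω ∂μ, ∀ i, ∃ j, A ω i j ≠ ⊥)
    (hint : Integrable (fun ω => ((⨆ i, ⨆ j, A ω i j) ⊔ 0).toReal) μ)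
    (γ : Set (Fin d) → EReal)
    (hγ : ∀ c : Set (Fin d), IsSCC (arcRel μ A) c →
      ∀ᵐ ω ∂μ, Tendsto
        (fun n => mpScale n (⨆ i, ⨆ (_ : i ∈ c), xvec (fun m => mpRestrict c (A (θ^[m] ω))) n i))
        atTop (𝓝 (γ c)))
    (L : Ω → Fin d → EReal)
    (hL : ∀ᵐ ω ∂μ, ∀ i, Tendsto (fun n => mpScale n (xvec (fun m => A (θ^[m] ω)) n i))
      atTop (𝓝 (L ω i))) :
    ∀ i, ∀ᵐ ω ∂μ, L ω i = limFormula (arcRel μ A) γ i := by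
  exact x_limit_deterministic_and_formula_general μ θ hθ A hA hnotop hint γ hγ L hL
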